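/- Let M ≥ 1, let Σ̂ be a Hermitian M×M complex matrix, let Σ̃ be its diagonal-averaged version, and let 𝒮 be any set of Hermitian Toeplitz M×M complex matrices. Then a matrix X₀ ∈ 𝒮 minimizes ‖X − Σ̂‖_F over X ∈ 𝒮 if and only if X₀ minimizes ‖X − Σ̃‖_F over X ∈ 𝒮. In particular, the least-squares fitting problems min_{X∈𝒮} ‖X − Σ̂‖_F² and min_{X∈𝒮} ‖X − Σ̃‖_F² are equivalent. -/

import Mathlib

open Matrix BigOperators

/-- Squared Frobenius norm of a complex matrix. -/
noncomputable def frobNormSq {M : ℕ} (A : Matrix (Fin M) (Fin M) ℂ) : ℝ :=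
  ∑ i : Fin M, ∑ j : Fin M, ‖A i j‖ ^ 2

/-- Frobenius norm of a complex matrix. -/
noncomputable def frobNorm {M : ℕ} (A : Matrix (Fin M) (Fin M) ℂ) : ℝ :=
  Real.sqrt (frobNormSq A)


lemma diag_count (M : ℕ) (d : ℤ) (hd : |d| < M) :
    (∑ i : Fin M, ∑ j : Fin M, if (j : ℤ) - (i : ℤ) = d then (1 : ℂ) else 0)
      = (M : ℂ) - (|d| : ℤ) := by
  have h1 : ∀ i : Fin M, (∑ j : Fin M, if (j : ℤ) - (i : ℤ) = d then (1 : ℂ) else 0)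
      = if 0 ≤ (i : ℤ) + d ∧ (i : ℤ) + d < M then 1 else 0 := by
    intro i
    split_ifs with h
    · rw [Finset.sum_eq_single (⟨((i : ℤ) + d).toNat, by omega⟩ : Fin M)]
      · rw [if_pos]
        simp only
        omega
      · intro b _ hb
        rw [if_neg]
        intro h'
        apply hb
        apply Fin.ext
        simp only
        omega
      · simp
    · apply Finset.sum_eq_zero
      intro j _
      rw [if_neg]
      have := j.2
      omega
  rw [Finset.sum_congr rfl (fun i _ => h1 i), Finset.sum_boole]
  have h2 : (Finset.univ.filter
      (fun i : Fin M => 0 ≤ (i : ℤ) + d ∧ (i : ℤ) + d < M)).card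
      = (Finset.Ico (max 0 (-d)) (min (M : ℤ) (M - d))).card := by
    apply Finset.card_bij (fun (i : Fin M) _ => (i : ℤ))
    · intro a ha
      have := a.2
      simp only [Finset.mem_filter, Finset.mem_univ, true_and] at ha
      rw [Finset.mem_Ico]
      omega
    · intro a _ b _ h
      apply Fin.ext
      simpa using h
    · intro b hb
      rw [Finset.mem_Ico] at hb
      refine ⟨⟨b.toNat, by omega⟩, ?_, ?_⟩
      · simp only [Finset.mem_filter, Finset.mem_univ, true_and]
        omega
      · simp only
        omega
  rw [h2, Int.card_Ico]
  have h3 : (((min (M : ℤ) (M - d) - max 0 (-d)).toNat : ℕ) : ℤ) = (M : ℤ) - |d| := by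
    rcases abs_cases d with h | h <;> omega
  have h4 := congrArg (fun z : ℤ => (z : ℂ)) h3
  push_cast at h4 ⊢
  exact h4

lemma cross_eq (M : ℕ) (Sh St X : Matrix (Fin M) (Fin M) ℂ)
    (hSt : ∀ i j : Fin M, St i j =
      (∑ k : Fin M, ∑ l : Fin M,
        if (l : ℤ) - (k : ℤ) = (j : ℤ) - (i : ℤ) then Sh k l else 0)
        / ((M : ℂ) - (|(j : ℤ) - (i : ℤ)| : ℤ)))
    (hX : ∀ i j k l : Fin M,
      (j : ℤ) - (i : ℤ) = (l : ℤ) - (k : ℤ) → X i j = X k l) :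
    ∑ i, ∑ j, X i j * star (St i j) = ∑ i, ∑ j, X i j * star (Sh i j) := by
  have e1 : ∀ i j : Fin M, X i j * star (St i j) = ∑ k : Fin M, ∑ l : Fin M,
      (X k l * star (Sh k l) / ((M : ℂ) - (|(l : ℤ) - (k : ℤ)| : ℤ)))
        * (if (j : ℤ) - (i : ℤ) = (l : ℤ) - (k : ℤ) then (1 : ℂ) else 0) := by
    intro i j
    have hs : star ((M : ℂ) - (|(j : ℤ) - (i : ℤ)| : ℤ))
        = (M : ℂ) - (|(j : ℤ) - (i : ℤ)| : ℤ) := by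
      rw [star_sub, star_natCast, star_intCast]
    rw [hSt, star_div₀, hs, star_sum, Finset.sum_div, Finset.mul_sum]
    refine Finset.sum_congr rfl fun k _ => ?_
    rw [star_sum, Finset.sum_div, Finset.mul_sum]
    refine Finset.sum_congr rfl fun l _ => ?_
    by_cases h : (l : ℤ) - (k : ℤ) = (j : ℤ) - (i : ℤ)
    · rw [if_pos h, if_pos h.symm, hX i j k l h.symm, h]
      ring
    · rw [if_neg h, if_neg (fun h' => h h'.symm)]
      simp
  simp_rw [e1]
  rw [← Finset.sum_product', ]
  rw [Finset.sum_congr rfl (fun p _ => (Finset.sum_product' Finset.univ Finset.univ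
    (fun k l : Fin M => (X k l * star (Sh k l) / ((M : ℂ) - (|(l : ℤ) - (k : ℤ)| : ℤ)))
        * (if (p.2 : ℤ) - (p.1 : ℤ) = (l : ℤ) - (k : ℤ) then (1 : ℂ) else 0))).symm)]
  rw [Finset.sum_comm, Finset.sum_product]
  refine Finset.sum_congr rfl fun k _ => Finset.sum_congr rfl fun l _ => ?_
  rw [← Finset.mul_sum, Finset.sum_product]
  have hd : |(l : ℤ) - (k : ℤ)| < M := by
    have := l.2
    have := k.2
    rw [abs_lt]
    omega
  rw [diag_count M _ hd]
  have hne : (M : ℂ) - (|(l : ℤ) - (k : ℤ)| : ℤ) ≠ 0 := by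
    intro h0
    have : (((M : ℤ) - |(l : ℤ) - (k : ℤ)| : ℤ) : ℂ) = 0 := by
      rw [Int.cast_sub, Int.cast_natCast]
      exact h0
    have := Int.cast_eq_zero.mp this
    omega
  exact div_mul_cancel₀ _ hne

lemma frob_expand {M : ℕ} (X A : Matrix (Fin M) (Fin M) ℂ) :
    frobNormSq (X - A) = frobNormSq X + frobNormSq A
      - 2 * (∑ i, ∑ j, X i j * star (A i j)).re := by
  unfold frobNormSq
  rw [Complex.re_sum, Finset.mul_sum, ← Finset.sum_add_distrib, ← Finset.sum_sub_distrib]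
  refine Finset.sum_congr rfl fun i _ => ?_
  rw [Complex.re_sum, Finset.mul_sum, ← Finset.sum_add_distrib, ← Finset.sum_sub_distrib]
  refine Finset.sum_congr rfl fun j _ => ?_
  simp only [Matrix.sub_apply, Complex.sq_norm, Complex.normSq_apply, Complex.sub_re,
    Complex.sub_im, Complex.mul_re, Complex.star_def, Complex.conj_re, Complex.conj_im]
  ring

lemma frobNorm_le_iff {M : ℕ} (A B : Matrix (Fin M) (Fin M) ℂ) :
    frobNorm A ≤ frobNorm B ↔ frobNormSq A ≤ frobNormSq B := by
  unfold frobNorm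
  apply Real.sqrt_le_sqrt_iff
  unfold frobNormSq
  positivity

/-- Over any set `𝒮` of Hermitian Toeplitz matrices, `X₀ ∈ 𝒮` minimizes `‖X − Σ̂‖_F`
iff it minimizes `‖X − Σ̃‖_F`, where `Σ̃` is the diagonal-averaged version of the
Hermitian matrix `Σ̂`. -/
theorem fit_sample_iff_fit_diag_avg (M : ℕ) (hM : 1 ≤ M)
    (Sh : Matrix (Fin M) (Fin M) ℂ) (hSh : Sh.IsHermitian)
    (St : Matrix (Fin M) (Fin M) ℂ)
    (hSt : ∀ i j : Fin M, St i j =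
      (∑ k : Fin M, ∑ l : Fin M,
        if (l : ℤ) - (k : ℤ) = (j : ℤ) - (i : ℤ) then Sh k l else 0)
        / ((M : ℂ) - (|(j : ℤ) - (i : ℤ)| : ℤ)))
    (𝒮 : Set (Matrix (Fin M) (Fin M) ℂ))
    (h𝒮herm : ∀ X ∈ 𝒮, X.IsHermitian)
    (h𝒮toep : ∀ X ∈ 𝒮, ∀ i j k l : Fin M,
      (j : ℤ) - (i : ℤ) = (l : ℤ) - (k : ℤ) → X i j = X k l)
    (X₀ : Matrix (Fin M) (Fin M) ℂ) (hX₀ : X₀ ∈ 𝒮) :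
    (∀ X ∈ 𝒮, frobNorm (X₀ - Sh) ≤ frobNorm (X - Sh)) ↔
      (∀ X ∈ 𝒮, frobNorm (X₀ - St) ≤ frobNorm (X - St)) := by
  refine forall₂_congr fun X hX => ?_
  rw [frobNorm_le_iff, frobNorm_le_iff, frob_expand, frob_expand, frob_expand, frob_expand,
    cross_eq M Sh St X hSt (h𝒮toep X hX), cross_eq M Sh St X₀ hSt (h𝒮toep X₀ hX₀)]
  constructor <;> intro h <;> linarith
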